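/- The number of points added by GREEDY is at most twice the number of distinct pairs: |G| ≤ 2 · |{CP(p) : p ∈ G}|. -/

import Mathlib

open Finset

attribute [local instance] Classical.propDecidable

/-- A point in the plane: first coordinate is the key, second is the time. -/
abbrev Pt : Type := ℤ × ℤ

/-- `r` lies in the closed axis-parallel rectangle with opposite corners `p` and `q`. -/
def inRect (p q r : Pt) : Prop :=
  min p.1 q.1 ≤ r.1 ∧ r.1 ≤ max p.1 q.1 ∧ min p.2 q.2 ≤ r.2 ∧ r.2 ≤ max p.2 q.2

/-- `r` lies in the open axis-parallel rectangle with opposite corners `p` and `q`. -/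
def inOpenRect (p q r : Pt) : Prop :=
  min p.1 q.1 < r.1 ∧ r.1 < max p.1 q.1 ∧ min p.2 q.2 < r.2 ∧ r.2 < max p.2 q.2

/-- `S` is an arborally satisfied set. -/
def ArbSat (S : Finset Pt) : Prop :=
  ∀ p ∈ S, ∀ q ∈ S, p.1 = q.1 ∨ p.2 = q.2 ∨ ∃ r ∈ S, r ≠ p ∧ r ≠ q ∧ inRect p q r

/-- `X` is the permutation point set `{(σ(t), t) : 1 ≤ t ≤ n}` of some permutation `σ` of
`{1, …, n}`. -/
def IsPermPointSet (n : ℕ) (X : Finset Pt) : Prop :=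
  ∃ σ : Equiv.Perm (Fin n),
    X = Finset.univ.image (fun t : Fin n => ((((σ t : ℕ) : ℤ) + 1, ((t : ℕ) : ℤ) + 1) : Pt))

/-- The points added by GREEDY at time `t`, given the point set `X` and the set `G` of points
added before time `t`: for the point `p` of `X` with time `t` and each point `q` of time `< t`
with a different key such that the rectangle spanned by `p` and `q` contains no other point of
time `< t`, the point `(key q, t)` is added. -/
noncomputable def greedyStep (X G : Finset Pt) (t : ℤ) : Finset Pt :=
  (X.filter (fun p => p.2 = t)).biUnion (fun p =>
    (((X ∪ G).filter (fun s => s.2 < t)).filter (fun q =>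
      q.1 ≠ p.1 ∧ ∀ r ∈ (X ∪ G).filter (fun s => s.2 < t), inRect p q r → r = q)).image
      (fun q => ((q.1, t) : Pt)))

/-- All points added by GREEDY while processing times `1, …, t`. -/
noncomputable def greedyUpTo (X : Finset Pt) : ℕ → Finset Pt
  | 0 => ∅
  | t + 1 => greedyUpTo X t ∪ greedyStep X (greedyUpTo X t) ((t : ℤ) + 1)

/-- The set `G` of points added by GREEDY over the whole execution on a permutation point set
`X` of size `n`. -/
noncomputable def greedyG (n : ℕ) (X : Finset Pt) : Finset Pt := greedyUpTo X n

/-- `OP r` is the point of `X` processed at the time at which `r` was added; for `r ∈ X`,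
`OP r = r`. -/
noncomputable def OP (X : Finset Pt) (r : Pt) : Pt :=
  ((X.filter (fun p => p.2 = r.2)).toList).headI

/-- The first point of `S` above `p`: the point of `S` with the same key as `p`, smaller time,
and the largest such time. -/
noncomputable def firstAbove (S : Finset Pt) (p : Pt) : Pt :=
  (p.1, (((S.filter (fun q => q.1 = p.1 ∧ q.2 < p.2)).image Prod.snd).max).unbotD 0)

/-- The pair `CP(p) = (OP(p), OP(q))` where `q` is the first point of `X ∪ G` above `p`. -/
noncomputable def CP (X G : Finset Pt) (p : Pt) : Pt × Pt :=
  (OP X p, OP X (firstAbove (X ∪ G) p))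

/-- `CP(p) ∈ MMC` (*zig*). -/
def inMMC (X G : Finset Pt) (p : Pt) : Prop :=
  ((CP X G p).1.1 < p.1 ∧ (CP X G p).2.1 < (CP X G p).1.1 ∧ (CP X G p).2.2 < (CP X G p).1.2)
  ∨ (p.1 < (CP X G p).1.1 ∧ (CP X G p).1.1 < (CP X G p).2.1 ∧ (CP X G p).2.2 < (CP X G p).1.2)

/-- `CP(p) ∈ MFC` (*zag*). -/
def inMFC (X G : Finset Pt) (p : Pt) : Prop :=
  ((CP X G p).1.1 < p.1 ∧ p.1 ≤ (CP X G p).2.1 ∧ (CP X G p).2.2 < p.2)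
  ∨ (p.1 < (CP X G p).1.1 ∧ (CP X G p).2.1 ≤ p.1 ∧ (CP X G p).2.2 < p.2)

/-- A pair is good if no point of `X` lies in the open rectangle spanned by it. -/
def IsGoodPair (X : Finset Pt) (pr : Pt × Pt) : Prop :=
  ∀ r ∈ X, ¬ inOpenRect pr.1 pr.2 r

/-- `B` is a block of `X`: the set of points of `X` whose times lie in some interval, whose
keys form a set of consecutive integers; blocks are nonempty. -/
def IsBlock (X B : Finset Pt) : Prop :=
  B.Nonempty ∧ (∃ i j : ℤ, B = X.filter (fun p => i ≤ p.2 ∧ p.2 ≤ j)) ∧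
    ∃ c d : ℤ, B.image Prod.fst = Finset.Icc c d

/-- `Top(B)`: the point of `B` with the smallest time. -/
noncomputable def TopPt (B : Finset Pt) : Pt :=
  ((B.filter (fun p => ∀ q ∈ B, p.2 ≤ q.2)).toList).headI

/-- A decomposition tree of `X`: a rooted tree whose nodes are blocks of `X`, whose root is
`X`, whose leaves are exactly the singleton blocks, and in which the children of every
internal node partition it. -/
structure DecompTree (X : Finset Pt) where
  nodes : Finset (Finset Pt)
  parent : Finset Pt → Finset Pt
  isBlock_nodes : ∀ B ∈ nodes, IsBlock X B
  root_mem : X ∈ nodes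
  parent_mem : ∀ B ∈ nodes, B ≠ X → parent B ∈ nodes
  ssubset_parent : ∀ B ∈ nodes, B ≠ X → B ⊂ parent B
  leaf_iff : ∀ B ∈ nodes, (¬ ∃ C ∈ nodes, C ≠ X ∧ parent C = B) ↔ B.card = 1
  children_partition : ∀ B ∈ nodes, B.card ≠ 1 →
    ∀ x ∈ B, ∃! C, C ∈ nodes ∧ C ≠ X ∧ parent C = B ∧ x ∈ C

/-- The children of a node `B` in a decomposition tree. -/
noncomputable def DecompTree.children {X : Finset Pt} (T : DecompTree X) (B : Finset Pt) :
    Finset (Finset Pt) :=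
  T.nodes.filter (fun C => C ≠ X ∧ T.parent C = B)

/-- `X` is `k`-decomposable: it admits a decomposition tree in which every node has at most
`k` children. -/
def kDecomposable (k : ℕ) (X : Finset Pt) : Prop :=
  ∃ T : DecompTree X, ∀ B ∈ T.nodes, (T.children B).card ≤ k

/-- `RT(p)`: the node of the decomposition tree closest to the root (i.e. containing all
others) among the nodes `B` with `Top(B) = p`. -/
noncomputable def RT {X : Finset Pt} (T : DecompTree X) (p : Pt) : Finset Pt :=
  (((T.nodes.filter (fun B => TopPt B = p)).filter
      (fun B => ∀ C ∈ T.nodes, TopPt C = p → C ⊆ B)).toList).headI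

/-- The points added by GREEDY (`G`) while processing `Top(B)` that lie to the left of
`Top(B)`. -/
noncomputable def leftSet (G B : Finset Pt) : Finset Pt :=
  G.filter (fun s => s.2 = (TopPt B).2 ∧ s.1 < (TopPt B).1)

/-- `Left(B)`: among the points added by GREEDY while processing `Top(B)` with key less than
`key (Top B)`, the one with the largest key (junk if none exists). -/
noncomputable def leftPt (G B : Finset Pt) : Pt :=
  (((leftSet G B).filter (fun s => ∀ r ∈ leftSet G B, r.1 ≤ s.1)).toList).headI

/-- The points added by GREEDY (`G`) while processing `Top(B)` that lie to the right of
`Top(B)`. -/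
noncomputable def rightSet (G B : Finset Pt) : Finset Pt :=
  G.filter (fun s => s.2 = (TopPt B).2 ∧ (TopPt B).1 < s.1)

/-- `Right(B)`: among the points added by GREEDY while processing `Top(B)` with key greater
than `key (Top B)`, the one with the smallest key (junk if none exists). -/
noncomputable def rightPt (G B : Finset Pt) : Pt :=
  (((rightSet G B).filter (fun s => ∀ r ∈ rightSet G B, s.1 ≤ r.1)).toList).headI

/-!
Say that `q` is visible from the processed point `p` if GREEDY copies the key of `q` to the time of
`p`; then `q` is the first point above the copy. Hence `CP` of a copy determines `p` and the time of
`q`. Of two points visible from `p` that have the same time and lie on the same side of `p`, the one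
with key nearer to `p` lies in the rectangle spanned by `p` and the other, so they coincide. So `CP`
takes each value at most twice, at most once on each side of `p`.
-/

section FirstPoints

variable {X S : Finset Pt} {p r : Pt}

theorem OP_eq_of_time_eq (hX : Set.InjOn Prod.snd (X : Set Pt)) (hp : p ∈ X) (h : p.2 = r.2) :
    OP X r = p := by
  have hfilter : X.filter (fun a => a.2 = r.2) = {p} := by
    refine eq_singleton_iff_unique_mem.2 ⟨mem_filter.2 ⟨hp, h⟩, fun a ha => ?_⟩
    obtain ⟨haX, hat⟩ := mem_filter.1 ha
    exact hX haX hp (hat.trans h.symm)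
  rw [OP, hfilter, toList_singleton, List.headI_cons]

theorem isGreatest_firstAbove_time {t : ℤ} (hmem : (p.1, t) ∈ S) (hlt : t < p.2) :
    IsGreatest {u | (p.1, u) ∈ S ∧ u < p.2} (firstAbove S p).2 := by
  set T := (S.filter fun q => q.1 = p.1 ∧ q.2 < p.2).image Prod.snd with hT
  have mem_T : ∀ u, u ∈ T ↔ (p.1, u) ∈ S ∧ u < p.2 := by
    simp [hT, and_left_comm]
  obtain ⟨m, hm⟩ : ∃ m : ℤ, T.max = m := max_of_mem ((mem_T t).2 ⟨hmem, hlt⟩)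
  have hfirst : (firstAbove S p).2 = m := by rw [firstAbove, ← hT, hm, WithBot.unbotD_coe]
  rw [hfirst]
  exact ⟨(mem_T m).1 (mem_of_max hm), fun u hu => le_max_of_eq ((mem_T u).2 hu) hm⟩

end FirstPoints

/-- The point `q` of `S` is visible from `p`: it is earlier than `p`, has another key, and is the
only point of `S` earlier than `p` in the rectangle spanned by `p` and `q`. Processing `p`, GREEDY
copies exactly the keys of these points. Points of `S` not earlier than `p` are ignored, so `S` may
be the set of all points of the whole execution. -/
structure GreedyVisible (S : Finset Pt) (p q : Pt) : Prop where
  mem : q ∈ S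
  time_lt : q.2 < p.2
  key_ne : q.1 ≠ p.1
  eq_of_inRect : ∀ r ∈ S, r.2 < p.2 → inRect p q r → r = q

namespace GreedyVisible

variable {S T : Finset Pt} {p q q' : Pt}

theorem congr (h : GreedyVisible S p q) (hST : ∀ r, r.2 < p.2 → (r ∈ S ↔ r ∈ T)) :
    GreedyVisible T p q where
  mem := (hST q h.time_lt).1 h.mem
  time_lt := h.time_lt
  key_ne := h.key_ne
  eq_of_inRect r hr hrt := h.eq_of_inRect r ((hST r hrt).2 hr) hrt

theorem firstAbove_eq (h : GreedyVisible S p q) : firstAbove S (q.1, p.2) = q := by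
  obtain ⟨⟨hmem, hlt⟩, hub⟩ :=
    isGreatest_firstAbove_time (p := (q.1, p.2)) h.mem h.time_lt
  have hle : q.2 ≤ (firstAbove S (q.1, p.2)).2 := hub ⟨h.mem, h.time_lt⟩
  refine h.eq_of_inRect _ hmem hlt ⟨min_le_right _ _, le_max_right _ _, ?_, ?_⟩
  · exact (min_le_right _ _).trans hle
  · exact hlt.le.trans (le_max_left _ _)

theorem eq_of_time_eq_of_side (h : GreedyVisible S p q) (h' : GreedyVisible S p q')
    (htime : q.2 = q'.2) (hside : p.1 < q.1 ↔ p.1 < q'.1) : q = q' := by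
  have hne := h.key_ne
  have hne' := h'.key_ne
  have hnearer : inRect p q q' ∨ inRect p q' q := by
    unfold inRect
    omega
  rcases hnearer with hq' | hq
  · exact (h.eq_of_inRect q' h'.mem h'.time_lt hq').symm
  · exact h'.eq_of_inRect q h.mem h.time_lt hq

end GreedyVisible

section Greedy

variable {X G : Finset Pt} {m : ℕ} {r : Pt}

theorem mem_greedyStep {t : ℤ} :
    r ∈ greedyStep X G t ↔ ∃ p ∈ X, p.2 = t ∧ ∃ q, GreedyVisible (X ∪ G) p q ∧ (q.1, p.2) = r := by
  simp only [greedyStep, mem_biUnion, mem_image, mem_filter]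
  constructor
  · rintro ⟨p, ⟨hp, rfl⟩, q, ⟨⟨hq, hlt⟩, hne, hempty⟩, rfl⟩
    exact ⟨p, hp, rfl, q, ⟨hq, hlt, hne, fun s hs hst => hempty s ⟨hs, hst⟩⟩, rfl⟩
  · rintro ⟨p, hp, rfl, q, hq, rfl⟩
    exact ⟨p, ⟨hp, rfl⟩, q, ⟨⟨hq.mem, hq.time_lt⟩, hq.key_ne,
      fun s hs => hq.eq_of_inRect s hs.1 hs.2⟩, rfl⟩

theorem time_of_mem_greedyStep {t : ℤ} (hr : r ∈ greedyStep X G t) : r.2 = t := by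
  obtain ⟨p, _, hp, q, _, rfl⟩ := mem_greedyStep.1 hr
  exact hp

theorem time_le_of_mem_greedyUpTo (hr : r ∈ greedyUpTo X m) : r.2 ≤ m := by
  induction m with
  | zero => exact absurd hr (notMem_empty r)
  | succ m ih =>
    push_cast
    rcases mem_union.1 hr with hr | hr
    · exact (ih hr).trans (Int.le_add_one le_rfl)
    · exact (time_of_mem_greedyStep hr).le

theorem mem_greedyUpTo_succ_iff_of_time_lt (hr : r.2 < (m : ℤ) + 1) :
    r ∈ greedyUpTo X (m + 1) ↔ r ∈ greedyUpTo X m := by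
  rw [greedyUpTo, mem_union, or_iff_left]
  exact fun h => hr.ne (time_of_mem_greedyStep h)

theorem exists_greedyVisible_of_mem_greedyUpTo (hr : r ∈ greedyUpTo X m) :
    ∃ p ∈ X, ∃ q, GreedyVisible (X ∪ greedyUpTo X m) p q ∧ (q.1, p.2) = r := by
  induction m with
  | zero => exact absurd hr (notMem_empty r)
  | succ m ih =>
    have hpersist {p q : Pt} (hp : p.2 ≤ (m : ℤ) + 1) (h : GreedyVisible (X ∪ greedyUpTo X m) p q) :
        GreedyVisible (X ∪ greedyUpTo X (m + 1)) p q :=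
      h.congr fun s hs => by
        rw [mem_union, mem_union, mem_greedyUpTo_succ_iff_of_time_lt (hs.trans_le hp)]
    rcases mem_union.1 hr with hold | hnew
    · obtain ⟨p, hp, q, hq, rfl⟩ := ih hold
      have hpm : (q.1, p.2).2 ≤ (m : ℤ) := time_le_of_mem_greedyUpTo hold
      exact ⟨p, hp, q, hpersist (hpm.trans (Int.le_add_one le_rfl)) hq, rfl⟩
    · obtain ⟨p, hp, hpt, q, hq, rfl⟩ := mem_greedyStep.1 hnew
      exact ⟨p, hp, q, hpersist hpt.le hq, rfl⟩

end Greedy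

section PairFibers

variable {n : ℕ} {X : Finset Pt} {r r' : Pt}

theorem OP_time (hX : Set.InjOn Prod.snd (X : Set Pt)) (hr : r ∈ X ∪ greedyG n X) :
    (OP X r).2 = r.2 := by
  rcases mem_union.1 hr with hr | hr
  · rw [OP_eq_of_time_eq hX hr rfl]
  · obtain ⟨p, hp, q, _, rfl⟩ := exists_greedyVisible_of_mem_greedyUpTo hr
    have hOP : OP X (q.1, p.2) = p := OP_eq_of_time_eq hX hp rfl
    rw [hOP]

theorem greedyVisible_OP_firstAbove (hX : Set.InjOn Prod.snd (X : Set Pt)) (hr : r ∈ greedyG n X) :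
    GreedyVisible (X ∪ greedyG n X) (OP X r) (firstAbove (X ∪ greedyG n X) r) := by
  obtain ⟨p, hp, q, hq, rfl⟩ := exists_greedyVisible_of_mem_greedyUpTo hr
  have hfirst : firstAbove (X ∪ greedyG n X) (q.1, p.2) = q := hq.firstAbove_eq
  have hOP : OP X (q.1, p.2) = p := OP_eq_of_time_eq hX hp rfl
  rwa [hOP, hfirst]

theorem eq_of_CP_eq_of_side (hX : Set.InjOn Prod.snd (X : Set Pt))
    (hr : r ∈ greedyG n X) (hr' : r' ∈ greedyG n X)
    (hCP : CP X (greedyG n X) r = CP X (greedyG n X) r')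
    (hside : (OP X r).1 < r.1 ↔ (OP X r).1 < r'.1) : r = r' := by
  obtain ⟨hOP, hOP_first⟩ := Prod.mk.inj hCP
  have hvis := greedyVisible_OP_firstAbove hX hr
  have hvis' := greedyVisible_OP_firstAbove hX hr'
  have hfirst_time : (firstAbove (X ∪ greedyG n X) r).2 = (firstAbove (X ∪ greedyG n X) r').2 := by
    rw [← OP_time hX hvis.mem, ← OP_time hX hvis'.mem, hOP_first]
  have hfirst : firstAbove (X ∪ greedyG n X) r = firstAbove (X ∪ greedyG n X) r' :=
    hvis.eq_of_time_eq_of_side (hOP ▸ hvis') hfirst_time hside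
  have hkey : r.1 = r'.1 := (Prod.ext_iff.1 hfirst).1
  have htime : r.2 = r'.2 := by
    rw [← OP_time hX (mem_union_right X hr), ← OP_time hX (mem_union_right X hr'), hOP]
  exact Prod.ext hkey htime

theorem card_filter_CP_eq_le_two (hX : Set.InjOn Prod.snd (X : Set Pt)) (c : Pt × Pt) :
    ((greedyG n X).filter fun r => CP X (greedyG n X) r = c).card ≤ 2 := by
  rw [← Fintype.card_bool, ← card_univ]
  refine card_le_card_of_injOn (fun r => decide (c.1.1 < r.1)) (fun _ _ => mem_univ _) ?_
  intro r hr r' hr' hside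
  obtain ⟨hrG, rfl⟩ := mem_filter.1 hr
  obtain ⟨hrG', hCP⟩ := mem_filter.1 hr'
  exact eq_of_CP_eq_of_side hX hrG hrG' hCP.symm (decide_eq_decide.1 hside)

end PairFibers

theorem IsPermPointSet.injOn_time {n : ℕ} {X : Finset Pt} (hX : IsPermPointSet n X) :
    Set.InjOn Prod.snd (X : Set Pt) := by
  obtain ⟨σ, rfl⟩ := hX
  rw [coe_image]
  exact Set.InjOn.image_of_comp fun s _ t _ h => Fin.ext (by simpa using h)

theorem card_G_le_two_mul_pairs_general (n : ℕ) (X : Finset Pt)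
    (hX : Set.InjOn Prod.snd (X : Set Pt)) :
    (greedyG n X).card ≤ 2 * ((greedyG n X).image (CP X (greedyG n X))).card :=
  card_le_mul_card_image _ 2 fun c _ => card_filter_CP_eq_le_two hX c

/-- `|G| ≤ 2 · |{CP(p) : p ∈ G}|`. -/
theorem card_G_le_two_mul_pairs (n : ℕ) (X : Finset Pt) (hX : IsPermPointSet n X) :
    (greedyG n X).card ≤ 2 * ((greedyG n X).image (CP X (greedyG n X))).card :=
  card_G_le_two_mul_pairs_general n X hX.injOn_time
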